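/- Let $b$ and $\varepsilon$ be real numbers with $b \ge 2$ and $0 < \varepsilon < 1/2$, where $\varepsilon$ is an inverse power of $2$ (that is, $\varepsilon = 2^{-m}$ for some natural number $m$), and set $c = \frac{1}{b\sqrt{\varepsilon}}$. Then for every natural number $k \ge 1$, $$\varepsilon^k \sum_{i=1}^{k} \frac{c^i}{i!} < \frac{k}{2^{3k/2}}.$$ -/

import Mathlib

/-- A power of one half that is less than one half is at most one quarter. -/
lemma le_quarter_of_eq_one_div_two_pow {eps : ℝ} (h : eps < 1 / 2)
    (hpow : ∃ m : ℕ, eps = 1 / (2 : ℝ) ^ m) : eps ≤ 1 / 4 := by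
  obtain ⟨m, rfl⟩ := hpow
  rcases m with _ | _ | m
  · norm_num at h
  · norm_num at h
  · have : (1 : ℝ) ≤ 2 ^ m := one_le_pow₀ (by norm_num)
    apply one_div_le_one_div_of_le (by norm_num)
    rw [pow_succ, pow_succ]
    linarith

/-- If `x` and `x * c` are both at most `r`, then `x ^ k` times the truncated exponential series
of `c`, without its constant term, is at most `k * r ^ k`. -/
lemma pow_mul_sum_pow_div_factorial_le {x c r : ℝ} (hx : 0 ≤ x) (hc : 0 ≤ c) (hxr : x ≤ r)
    (hxc : x * c ≤ r) (k : ℕ) :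
    x ^ k * ∑ i ∈ Finset.Icc 1 k, c ^ i / (Nat.factorial i : ℝ) ≤ k * r ^ k := by
  rw [Finset.mul_sum]
  have key : ∀ i ∈ Finset.Icc 1 k, x ^ k * (c ^ i / (Nat.factorial i : ℝ)) ≤ r ^ k := by
    intro i hi
    obtain ⟨j, rfl⟩ := Nat.exists_eq_add_of_le (Finset.mem_Icc.mp hi).2
    have hfac : (1 : ℝ) ≤ Nat.factorial i := by exact_mod_cast Nat.factorial_pos i
    calc x ^ (i + j) * (c ^ i / (Nat.factorial i : ℝ))
        ≤ x ^ (i + j) * c ^ i := by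
          gcongr
          exact div_le_self (by positivity) hfac
      _ = (x * c) ^ i * x ^ j := by ring
      _ ≤ r ^ i * r ^ j := by
          have : 0 ≤ r := hx.trans hxr
          gcongr
      _ = r ^ (i + j) := (pow_add r i j).symm
  simpa using Finset.sum_le_sum key

/-- With `b ≥ 2`, `eps < 1/2` an inverse power of two and `c = 1/(b * sqrt eps)`, for every
`k ≥ 1`, `eps^k * ∑_{i=1}^{k} c^i / i! < k / 2^(3k/2)`. -/
theorem stmt_10 (b eps : ℝ) (hb : 2 ≤ b) (heps0 : 0 < eps) (heps1 : eps < 1 / 2)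
    (hpow : ∃ m : ℕ, eps = 1 / (2 : ℝ) ^ m)
    (c : ℝ) (hc : c = 1 / (b * Real.sqrt eps)) (k : ℕ) (hk : 1 ≤ k) :
    eps ^ k * ∑ i ∈ Finset.Icc 1 k, c ^ i / (Nat.factorial i : ℝ) <
      (k : ℝ) / (2 : ℝ) ^ ((3 * (k : ℝ)) / 2) := by
  have hq := le_quarter_of_eq_one_div_two_pow heps1 hpow
  have hb0 : 0 < b := by linarith
  have hs0 : 0 < Real.sqrt eps := Real.sqrt_pos.mpr heps0
  have hs : Real.sqrt eps ≤ 1 / 2 := Real.sqrt_le_iff.mpr ⟨by norm_num, by linarith⟩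
  have hc0 : 0 ≤ c := by rw [hc]; positivity
  have hec : eps * c ≤ 1 / 4 := by
    have h : eps * c = Real.sqrt eps / b := by
      rw [hc]
      nth_rewrite 1 [← Real.mul_self_sqrt heps0.le]
      field_simp
    rw [h, div_le_iff₀ hb0]
    linarith
  have hk0 : (0 : ℝ) < k := by exact_mod_cast hk
  refine (pow_mul_sum_pow_div_factorial_le heps0.le hc0 hq hec k).trans_lt ?_
  rw [one_div, inv_pow, ← div_eq_mul_inv]
  refine div_lt_div_of_pos_left hk0 (by positivity) ?_
  calc (2 : ℝ) ^ ((3 * (k : ℝ)) / 2) < (2 : ℝ) ^ (2 * (k : ℝ)) :=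
        Real.rpow_lt_rpow_of_exponent_lt (by norm_num) (by linarith)
    _ = 4 ^ k := by
        rw [Real.rpow_mul (by norm_num), Real.rpow_natCast]
        norm_num
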